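/- The cubic B_n-Toda bracket π₃, given by {a_i, a_{i+1}} = a_i a_{i+1} b_{i+1}, {a_i, b_i} = −a_i b_i² − a_i³ (for i < n), {a_n, b_n} = −a_n b_n² − 2a_n³, {a_i, b_{i+2}} = a_i a_{i+1}², {a_i, b_{i+1}} = a_i b_{i+1}² + a_i³, {a_i, b_{i−1}} = −a_{i−1}² a_i, {b_i, b_{i+1}} = 2a_i²(b_i + b_{i+1}), all other coordinate brackets zero, satisfies the Jacobi identity and is compatible with the linear bracket π₁ given by {a_i, b_i} = −a_i, {a_i, b_{i+1}} = a_i. -/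

import Mathlib

/-- Index set for `B_n`-Toda variables `(a_1, …, a_n, b_1, …, b_n)` (0-based). -/
abbrev BnIdx (n : ℕ) := Fin n ⊕ Fin n

/-- The value of the `a`-variable with (0-based) index `m`, zero out of range. -/
noncomputable def av {n : ℕ} (x : BnIdx n → ℝ) (m : ℕ) : ℝ :=
  if h : m < n then x (.inl ⟨m, h⟩) else 0

/-- The value of the `b`-variable with (0-based) index `m`, zero out of range. -/
noncomputable def bv {n : ℕ} (x : BnIdx n → ℝ) (m : ℕ) : ℝ :=
  if h : m < n then x (.inr ⟨m, h⟩) else 0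

/-- Structure matrix of the linear `B_n`-Toda bracket `π₁`:
`{a_i, b_i} = −a_i`, `{a_i, b_{i+1}} = a_i`, all other coordinate brackets zero. -/
noncomputable def bnLinP (n : ℕ) : BnIdx n → BnIdx n → (BnIdx n → ℝ) → ℝ
  | .inl i, .inr j, x =>
      if (j : ℕ) = (i : ℕ) then -(x (.inl i))
      else if (j : ℕ) = (i : ℕ) + 1 then x (.inl i) else 0
  | .inr j, .inl i, x =>
      -(if (j : ℕ) = (i : ℕ) then -(x (.inl i))
        else if (j : ℕ) = (i : ℕ) + 1 then x (.inl i) else 0)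
  | _, _, _ => 0

/-- The entry `{a_i, b_j}` of the cubic `B_n`-Toda bracket `π₃`:
`{a_i, b_{i−1}} = −a_{i−1}² a_i`;  `{a_i, b_i} = −a_i b_i² − a_i³` for `i < n`
and `{a_n, b_n} = −a_n b_n² − 2a_n³`;  `{a_i, b_{i+1}} = a_i b_{i+1}² + a_i³`;
`{a_i, b_{i+2}} = a_i a_{i+1}²`. -/
noncomputable def bnCubAB (n : ℕ) (i j : Fin n) (x : BnIdx n → ℝ) : ℝ :=
  if (j : ℕ) + 1 = (i : ℕ) then -((av x j)^2 * av x i)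
  else if (j : ℕ) = (i : ℕ) then
    (if (i : ℕ) + 1 = n then -(av x i * (bv x j)^2) - 2 * (av x i)^3
     else -(av x i * (bv x j)^2) - (av x i)^3)
  else if (j : ℕ) = (i : ℕ) + 1 then av x i * (bv x j)^2 + (av x i)^3
  else if (j : ℕ) = (i : ℕ) + 2 then av x i * (av x ((i : ℕ) + 1))^2
  else 0

/-- Structure matrix of the cubic `B_n`-Toda bracket `π₃`:  additionally
`{a_i, a_{i+1}} = a_i a_{i+1} b_{i+1}` and `{b_i, b_{i+1}} = 2a_i²(b_i + b_{i+1})`;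
all other coordinate brackets zero. -/
noncomputable def bnCubP (n : ℕ) : BnIdx n → BnIdx n → (BnIdx n → ℝ) → ℝ
  | .inl i, .inl j, x =>
      if (j : ℕ) = (i : ℕ) + 1 then av x i * av x j * bv x j
      else if (i : ℕ) = (j : ℕ) + 1 then -(av x j * av x i * bv x i) else 0
  | .inl i, .inr j, x => bnCubAB n i j x
  | .inr j, .inl i, x => -(bnCubAB n i j x)
  | .inr i, .inr j, x =>
      if (j : ℕ) = (i : ℕ) + 1 then 2 * (av x i)^2 * (bv x i + bv x j)
      else if (i : ℕ) = (j : ℕ) + 1 then -(2 * (av x j)^2 * (bv x j + bv x i)) else 0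

/-- Partial derivative in the `s`-th coordinate direction. -/
noncomputable def pd {n : ℕ} (f : (BnIdx n → ℝ) → ℝ) (s : BnIdx n) (x : BnIdx n → ℝ) : ℝ :=
  fderiv ℝ f x (Pi.single s 1)

/-- Entry `{a_i, a_j}` of `t π₁ + π₃`, for coordinates `a b : ℕ → ℝ`. -/
def entryAA (a b : ℕ → ℝ) (i j : ℕ) : ℝ :=
  if j = i + 1 then a i * a j * b j else if i = j + 1 then -(a j * a i * b i) else 0

/-- Entry `{a_i, b_j}` of `t π₁ + π₃`; `c i` is the coefficient of `a_i³` in `-{a_i, b_i}`. -/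
def entryAB (t : ℝ) (c a b : ℕ → ℝ) (i j : ℕ) : ℝ :=
  if j + 1 = i then -((a j) ^ 2 * a i)
  else if j = i then -(t * a i) - a i * (b j) ^ 2 - c i * (a i) ^ 3
  else if j = i + 1 then t * a i + a i * (b j) ^ 2 + (a i) ^ 3
  else if j = i + 2 then a i * (a (i + 1)) ^ 2
  else 0

/-- Entry `{b_i, b_j}` of `t π₁ + π₃`. -/
def entryBB (a b : ℕ → ℝ) (i j : ℕ) : ℝ :=
  if j = i + 1 then 2 * (a i) ^ 2 * (b i + b j)
  else if i = j + 1 then -(2 * (a j) ^ 2 * (b j + b i)) else 0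

/-- Derivative of `entryAA` at `(a, b)` in the direction `(p, q)`. -/
def dirAA (a b p q : ℕ → ℝ) (i j : ℕ) : ℝ :=
  if j = i + 1 then p i * a j * b j + a i * p j * b j + a i * a j * q j
  else if i = j + 1 then -(p j * a i * b i + a j * p i * b i + a j * a i * q i) else 0

/-- Derivative of `entryAB` at `(a, b)` in the direction `(p, q)`. -/
def dirAB (t : ℝ) (c a b p q : ℕ → ℝ) (i j : ℕ) : ℝ :=
  if j + 1 = i then -(2 * a j * p j * a i + (a j) ^ 2 * p i)
  else if j = i then
    -(t * p i) - (p i * (b j) ^ 2 + a i * (2 * b j * q j)) - c i * (3 * (a i) ^ 2 * p i)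
  else if j = i + 1 then t * p i + (p i * (b j) ^ 2 + a i * (2 * b j * q j)) + 3 * (a i) ^ 2 * p i
  else if j = i + 2 then p i * (a (i + 1)) ^ 2 + a i * (2 * a (i + 1) * p (i + 1))
  else 0

/-- Derivative of `entryBB` at `(a, b)` in the direction `(p, q)`. -/
def dirBB (a b p q : ℕ → ℝ) (i j : ℕ) : ℝ :=
  if j = i + 1 then 2 * (2 * a i * p i) * (b i + b j) + 2 * (a i) ^ 2 * (q i + q j)
  else if i = j + 1 then
    -(2 * (2 * a j * p j) * (b j + b i) + 2 * (a j) ^ 2 * (q j + q i)) else 0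

/-- A statement about three indices holds once it holds for indices within distance four and for
indices two of which are farther apart. -/
lemma index_cases {P : ℕ → ℕ → ℕ → Prop}
    (near : ∀ m p q r, p ≤ 4 → q ≤ 4 → r ≤ 4 → (p = 0 ∨ q = 0 ∨ r = 0) →
      P (m + p) (m + q) (m + r))
    (far : ∀ i j k, (i + 4 < j ∨ j + 4 < i ∨ i + 4 < k ∨ k + 4 < i ∨ j + 4 < k ∨ k + 4 < j) →
      P i j k)
    (i j k : ℕ) : P i j k := by
  by_cases h : i + 4 < j ∨ j + 4 < i ∨ i + 4 < k ∨ k + 4 < i ∨ j + 4 < k ∨ k + 4 < j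
  · exact far i j k h
  · obtain ⟨m, hm⟩ : ∃ m, m = min i (min j k) := ⟨_, rfl⟩
    have := near m (i - m) (j - m) (k - m) (by omega) (by omega) (by omega) (by omega)
    rwa [show m + (i - m) = i by omega, show m + (j - m) = j by omega,
      show m + (k - m) = k by omega] at this

lemma dirAA_eq_zero {a b p q : ℕ → ℝ} {i j : ℕ}
    (h : i ≤ j + 2 → j ≤ i + 2 → ∀ l, (i ≤ l ∧ l ≤ j ∨ j ≤ l ∧ l ≤ i) → p l = 0 ∧ q l = 0) :
    dirAA a b p q i j = 0 := by
  unfold dirAA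
  split_ifs with h₁ h₂
  · simp [h (by omega) (by omega) i (by omega), h (by omega) (by omega) j (by omega)]
  · simp [h (by omega) (by omega) i (by omega), h (by omega) (by omega) j (by omega)]
  · rfl

lemma dirAB_eq_zero {t : ℝ} {c a b p q : ℕ → ℝ} {i j : ℕ}
    (h : i ≤ j + 2 → j ≤ i + 2 → ∀ l, (i ≤ l ∧ l ≤ j ∨ j ≤ l ∧ l ≤ i) → p l = 0 ∧ q l = 0) :
    dirAB t c a b p q i j = 0 := by
  unfold dirAB
  split_ifs with h₁ h₂ h₃ h₄
  · simp [h (by omega) (by omega) i (by omega), h (by omega) (by omega) j (by omega)]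
  · simp [h (by omega) (by omega) i (by omega), h (by omega) (by omega) j (by omega)]
  · simp [h (by omega) (by omega) i (by omega), h (by omega) (by omega) j (by omega)]
  · simp [h (by omega) (by omega) i (by omega), h (by omega) (by omega) (i + 1) (by omega)]
  · rfl

lemma dirBB_eq_zero {a b p q : ℕ → ℝ} {i j : ℕ}
    (h : i ≤ j + 2 → j ≤ i + 2 → ∀ l, (i ≤ l ∧ l ≤ j ∨ j ≤ l ∧ l ≤ i) → p l = 0 ∧ q l = 0) :
    dirBB a b p q i j = 0 := by
  unfold dirBB
  split_ifs with h₁ h₂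
  · simp [h (by omega) (by omega) i (by omega), h (by omega) (by omega) j (by omega)]
  · simp [h (by omega) (by omega) i (by omega), h (by omega) (by omega) j (by omega)]
  · rfl

lemma entryAA_eq_zero {a b : ℕ → ℝ} {i j : ℕ} (h : i + 2 < j ∨ j + 2 < i) :
    entryAA a b i j = 0 := by
  unfold entryAA
  simp (disch := omega) only [if_neg]

lemma entryAB_eq_zero {t : ℝ} {c a b : ℕ → ℝ} {i j : ℕ} (h : i + 2 < j ∨ j + 2 < i) :
    entryAB t c a b i j = 0 := by
  unfold entryAB
  simp (disch := omega) only [if_neg]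

lemma entryBB_eq_zero {a b : ℕ → ℝ} {i j : ℕ} (h : i + 2 < j ∨ j + 2 < i) :
    entryBB a b i j = 0 := by
  unfold entryBB
  simp (disch := omega) only [if_neg]

/-- The `a`-components of the Hamiltonian vector field of `a_i`. -/
def fieldAA (n : ℕ) (a b : ℕ → ℝ) (i l : ℕ) : ℝ := if l < n then entryAA a b l i else 0

/-- The `b`-components of the Hamiltonian vector field of `a_i`. -/
def fieldAB (n : ℕ) (t : ℝ) (c a b : ℕ → ℝ) (i l : ℕ) : ℝ :=
  if l < n then -entryAB t c a b i l else 0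

/-- The `a`-components of the Hamiltonian vector field of `b_i`. -/
def fieldBA (n : ℕ) (t : ℝ) (c a b : ℕ → ℝ) (i l : ℕ) : ℝ :=
  if l < n then entryAB t c a b l i else 0

/-- The `b`-components of the Hamiltonian vector field of `b_i`. -/
def fieldBB (n : ℕ) (a b : ℕ → ℝ) (i l : ℕ) : ℝ := if l < n then entryBB a b l i else 0

lemma field_a_eq_zero {n : ℕ} {t : ℝ} {c a b : ℕ → ℝ} {i l : ℕ} (h : i + 2 < l ∨ l + 2 < i) :
    fieldAA n a b i l = 0 ∧ fieldAB n t c a b i l = 0 := by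
  simp [fieldAA, fieldAB, entryAA_eq_zero h.symm, entryAB_eq_zero h]

lemma field_b_eq_zero {n : ℕ} {t : ℝ} {c a b : ℕ → ℝ} {i l : ℕ} (h : i + 2 < l ∨ l + 2 < i) :
    fieldBA n t c a b i l = 0 ∧ fieldBB n a b i l = 0 := by
  simp [fieldBA, fieldBB, entryAB_eq_zero h.symm, entryBB_eq_zero h.symm]

section Jacobi

variable {n : ℕ} {t : ℝ} {c a b : ℕ → ℝ}

set_option maxHeartbeats 8000000 in
lemma jacobi_aaa (i j k : ℕ) (hi : i < n) (hj : j < n) (hk : k < n) :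
    dirAA a b (fieldAA n a b i) (fieldAB n t c a b i) j k
      + dirAA a b (fieldAA n a b j) (fieldAB n t c a b j) k i
      + dirAA a b (fieldAA n a b k) (fieldAB n t c a b k) i j = 0 := by
  induction i, j, k using index_cases with
  | near m p q r hp hq hr h =>
    interval_cases p <;> interval_cases q <;> interval_cases r <;> first
    | omega
    | simp (disch := omega) only [dirAA, fieldAA, fieldAB, entryAA, entryAB, if_pos, if_neg,
        if_true, add_assoc, Nat.reduceAdd, add_zero] <;> ring1
  | far i j k h =>
    rw [dirAA_eq_zero fun _ _ l _ ↦ field_a_eq_zero (by omega),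
      dirAA_eq_zero fun _ _ l _ ↦ field_a_eq_zero (by omega),
      dirAA_eq_zero fun _ _ l _ ↦ field_a_eq_zero (by omega)]
    simp

set_option maxHeartbeats 8000000 in
lemma jacobi_aab (hc : ∀ l, l + 1 < n → c l = 1)
    (i j k : ℕ) (hi : i < n) (hj : j < n) (hk : k < n) :
    dirAB t c a b (fieldAA n a b i) (fieldAB n t c a b i) j k
      - dirAB t c a b (fieldAA n a b j) (fieldAB n t c a b j) i k
      + dirAA a b (fieldBA n t c a b k) (fieldBB n a b k) i j = 0 := by
  induction i, j, k using index_cases with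
  | near m p q r hp hq hr h =>
    interval_cases p <;> interval_cases q <;> interval_cases r <;> first
    | omega
    | simp (disch := omega) only [dirAA, dirAB, fieldAA, fieldAB, fieldBA, fieldBB,
        entryAA, entryAB, entryBB, if_pos, if_neg, if_true, hc, add_assoc,
        Nat.reduceAdd, add_zero]
      ring1
  | far i j k h =>
    rw [dirAB_eq_zero fun _ _ l _ ↦ field_a_eq_zero (by omega),
      dirAB_eq_zero fun _ _ l _ ↦ field_a_eq_zero (by omega),
      dirAA_eq_zero fun _ _ l _ ↦ field_b_eq_zero (by omega)]
    simp

set_option maxHeartbeats 8000000 in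
lemma jacobi_abb (hc : ∀ l, l + 1 < n → c l = 1)
    (i j k : ℕ) (hi : i < n) (hj : j < n) (hk : k < n) :
    dirBB a b (fieldAA n a b i) (fieldAB n t c a b i) j k
      - dirAB t c a b (fieldBA n t c a b j) (fieldBB n a b j) i k
      + dirAB t c a b (fieldBA n t c a b k) (fieldBB n a b k) i j = 0 := by
  induction i, j, k using index_cases with
  | near m p q r hp hq hr h =>
    interval_cases p <;> interval_cases q <;> interval_cases r <;> first
    | omega
    | simp (disch := omega) only [dirBB, dirAB, fieldAA, fieldAB, fieldBA, fieldBB,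
        entryAA, entryAB, entryBB, if_pos, if_neg, if_true, hc, add_assoc,
        Nat.reduceAdd, add_zero]
      ring1
  | far i j k h =>
    rw [dirBB_eq_zero fun _ _ l _ ↦ field_a_eq_zero (by omega),
      dirAB_eq_zero fun _ _ l _ ↦ field_b_eq_zero (by omega),
      dirAB_eq_zero fun _ _ l _ ↦ field_b_eq_zero (by omega)]
    simp

set_option maxHeartbeats 8000000 in
lemma jacobi_bbb (hc : ∀ l, l + 1 < n → c l = 1)
    (i j k : ℕ) (hi : i < n) (hj : j < n) (hk : k < n) :
    dirBB a b (fieldBA n t c a b i) (fieldBB n a b i) j k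
      + dirBB a b (fieldBA n t c a b j) (fieldBB n a b j) k i
      + dirBB a b (fieldBA n t c a b k) (fieldBB n a b k) i j = 0 := by
  induction i, j, k using index_cases with
  | near m p q r hp hq hr h =>
    interval_cases p <;> interval_cases q <;> interval_cases r <;> first
    | omega
    | simp (disch := omega) only [dirBB, fieldBA, fieldBB, entryAB, entryBB, if_pos, if_neg,
        if_true, hc, add_assoc, Nat.reduceAdd, add_zero] <;> ring1
  | far i j k h =>
    rw [dirBB_eq_zero fun _ _ l _ ↦ field_b_eq_zero (by omega),
      dirBB_eq_zero fun _ _ l _ ↦ field_b_eq_zero (by omega),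
      dirBB_eq_zero fun _ _ l _ ↦ field_b_eq_zero (by omega)]
    simp

end Jacobi

/-- `f` is differentiable at `x` with derivative `d` in the direction `X`. -/
def HasDirDeriv {n : ℕ} (f : (BnIdx n → ℝ) → ℝ) (d : ℝ) (x X : BnIdx n → ℝ) : Prop :=
  ∃ f' : (BnIdx n → ℝ) →L[ℝ] ℝ, HasFDerivAt f f' x ∧ f' X = d

namespace HasDirDeriv

variable {n : ℕ} {f g : (BnIdx n → ℝ) → ℝ} {d e : ℝ} {x X : BnIdx n → ℝ}

lemma const (r : ℝ) : HasDirDeriv (fun _ ↦ r) 0 x X := ⟨0, hasFDerivAt_const r x, rfl⟩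

lemma add (hf : HasDirDeriv f d x X) (hg : HasDirDeriv g e x X) :
    HasDirDeriv (fun y ↦ f y + g y) (d + e) x X := by
  obtain ⟨f', hf, rfl⟩ := hf
  obtain ⟨g', hg, rfl⟩ := hg
  exact ⟨_, hf.add hg, rfl⟩

lemma neg (hf : HasDirDeriv f d x X) : HasDirDeriv (fun y ↦ -f y) (-d) x X := by
  obtain ⟨f', hf, rfl⟩ := hf
  exact ⟨_, hf.neg, rfl⟩

lemma sub (hf : HasDirDeriv f d x X) (hg : HasDirDeriv g e x X) :
    HasDirDeriv (fun y ↦ f y - g y) (d - e) x X := by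
  simpa only [sub_eq_add_neg] using hf.add hg.neg

lemma mul (hf : HasDirDeriv f d x X) (hg : HasDirDeriv g e x X) :
    HasDirDeriv (fun y ↦ f y * g y) (d * g x + f x * e) x X := by
  obtain ⟨f', hf, rfl⟩ := hf
  obtain ⟨g', hg, rfl⟩ := hg
  refine ⟨_, hf.mul hg, ?_⟩
  simp
  ring

lemma const_mul (r : ℝ) (hf : HasDirDeriv f d x X) :
    HasDirDeriv (fun y ↦ r * f y) (r * d) x X := by
  simpa using (const r).mul hf

lemma sq (hf : HasDirDeriv f d x X) : HasDirDeriv (fun y ↦ f y ^ 2) (2 * f x * d) x X := by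
  have := hf.mul hf
  convert this using 1
  · ext y; ring
  · ring

lemma cube (hf : HasDirDeriv f d x X) : HasDirDeriv (fun y ↦ f y ^ 3) (3 * f x ^ 2 * d) x X := by
  have := hf.mul hf.sq
  convert this using 1
  · ext y; ring
  · ring

lemma sum_mul_pd (hf : HasDirDeriv f d x X) : ∑ s, X s * pd f s x = d := by
  obtain ⟨f', hf, rfl⟩ := hf
  simp only [pd, hf.fderiv]
  conv_rhs => rw [pi_eq_sum_univ' X, map_sum]
  refine Finset.sum_congr rfl fun s _ ↦ ?_
  rw [map_smul, smul_eq_mul]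

end HasDirDeriv

section Coordinates

variable {n : ℕ} {x X : BnIdx n → ℝ}

lemma hasDirDeriv_av (m : ℕ) : HasDirDeriv (fun y ↦ av y m) (av X m) x X := by
  unfold av
  split_ifs with h
  · exact ⟨_, hasFDerivAt_apply _ _, rfl⟩
  · exact .const 0

lemma hasDirDeriv_bv (m : ℕ) : HasDirDeriv (fun y ↦ bv y m) (bv X m) x X := by
  unfold bv
  split_ifs with h
  · exact ⟨_, hasFDerivAt_apply _ _, rfl⟩
  · exact .const 0

lemma hasDirDeriv_entryAA (i j : ℕ) :
    HasDirDeriv (fun y ↦ entryAA (av y) (bv y) i j)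
      (dirAA (av x) (bv x) (av X) (bv X) i j) x X := by
  have main (k l : ℕ) : HasDirDeriv (fun y ↦ av y k * av y l * bv y l)
      (av X k * av x l * bv x l + av x k * av X l * bv x l + av x k * av x l * bv X l) x X := by
    convert ((hasDirDeriv_av k).mul (hasDirDeriv_av l)).mul (hasDirDeriv_bv l) using 1
    ring
  unfold entryAA dirAA
  split_ifs
  · exact main i j
  · exact (main j i).neg
  · exact .const 0

lemma hasDirDeriv_entryAB (t : ℝ) (c : ℕ → ℝ) (i j : ℕ) :
    HasDirDeriv (fun y ↦ entryAB t c (av y) (bv y) i j)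
      (dirAB t c (av x) (bv x) (av X) (bv X) i j) x X := by
  unfold entryAB dirAB
  split_ifs
  · exact ((hasDirDeriv_av j).sq.mul (hasDirDeriv_av i)).neg
  · exact (((hasDirDeriv_av i).const_mul t).neg.sub
      ((hasDirDeriv_av i).mul (hasDirDeriv_bv j).sq)).sub ((hasDirDeriv_av i).cube.const_mul _)
  · exact (((hasDirDeriv_av i).const_mul t).add
      ((hasDirDeriv_av i).mul (hasDirDeriv_bv j).sq)).add (hasDirDeriv_av i).cube
  · exact (hasDirDeriv_av i).mul (hasDirDeriv_av (i + 1)).sq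
  · exact .const 0

lemma hasDirDeriv_entryBB (i j : ℕ) :
    HasDirDeriv (fun y ↦ entryBB (av y) (bv y) i j)
      (dirBB (av x) (bv x) (av X) (bv X) i j) x X := by
  have main (k l : ℕ) : HasDirDeriv (fun y ↦ 2 * (av y k) ^ 2 * (bv y k + bv y l))
      (2 * (2 * av x k * av X k) * (bv x k + bv x l) + 2 * (av x k) ^ 2 * (bv X k + bv X l))
      x X :=
    ((hasDirDeriv_av k).sq.const_mul 2).mul ((hasDirDeriv_bv k).add (hasDirDeriv_bv l))
  unfold entryBB dirBB
  split_ifs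
  · exact main i j
  · exact (main j i).neg
  · exact .const 0

end Coordinates

/-- The coefficient of `a_i³` in `-{a_i, b_i}`. -/
noncomputable def cubeCoeff (n i : ℕ) : ℝ := if i + 1 = n then 2 else 1

/-- The structure matrix of `t π₁ + π₃`. -/
noncomputable def pencil (n : ℕ) (t : ℝ) (u v : BnIdx n) (y : BnIdx n → ℝ) : ℝ :=
  t * bnLinP n u v y + bnCubP n u v y

section Pencil

variable {n : ℕ} (t : ℝ)

lemma av_coe {x : BnIdx n → ℝ} (i : Fin n) : av x i = x (.inl i) := by simp [av]

lemma pencil_inl_inl (i j : Fin n) :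
    pencil n t (.inl i) (.inl j) = fun y ↦ entryAA (av y) (bv y) i j := by
  ext y
  simp [pencil, bnLinP, bnCubP, entryAA]

lemma pencil_inl_inr (i j : Fin n) :
    pencil n t (.inl i) (.inr j) = fun y ↦ entryAB t (cubeCoeff n) (av y) (bv y) i j := by
  ext y
  simp only [pencil, bnLinP, bnCubP, bnCubAB, entryAB, cubeCoeff, ← av_coe]
  split_ifs <;> first | omega | ring

lemma pencil_inr_inl (i j : Fin n) :
    pencil n t (.inr j) (.inl i) = fun y ↦ -entryAB t (cubeCoeff n) (av y) (bv y) i j := by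
  rw [← funext_iff.2 fun y ↦ congrArg Neg.neg (congrFun (pencil_inl_inr t i j) y)]
  ext y
  simp only [pencil, bnLinP, bnCubP]
  ring

lemma pencil_inr_inr (i j : Fin n) :
    pencil n t (.inr i) (.inr j) = fun y ↦ entryBB (av y) (bv y) i j := by
  ext y
  simp [pencil, bnLinP, bnCubP, entryBB]

lemma av_pencil_inl (x : BnIdx n → ℝ) (i : Fin n) :
    av (fun s ↦ pencil n t s (.inl i) x) = fieldAA n (av x) (bv x) i := by
  ext l
  rw [av]
  simp [pencil_inl_inl, fieldAA]

lemma bv_pencil_inl (x : BnIdx n → ℝ) (i : Fin n) :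
    bv (fun s ↦ pencil n t s (.inl i) x) = fieldAB n t (cubeCoeff n) (av x) (bv x) i := by
  ext l
  rw [bv]
  simp [pencil_inr_inl, fieldAB]

lemma av_pencil_inr (x : BnIdx n → ℝ) (i : Fin n) :
    av (fun s ↦ pencil n t s (.inr i) x) = fieldBA n t (cubeCoeff n) (av x) (bv x) i := by
  ext l
  rw [av]
  simp [pencil_inl_inr, fieldBA]

lemma bv_pencil_inr (x : BnIdx n → ℝ) (i : Fin n) :
    bv (fun s ↦ pencil n t s (.inr i) x) = fieldBB n (av x) (bv x) i := by
  ext l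
  rw [bv]
  simp [pencil_inr_inr, fieldBB]

/-- The Hamiltonian derivative `{ {v, w}, u }` for the bracket `t π₁ + π₃`. -/
noncomputable def nestedBracket (x : BnIdx n → ℝ) (u v w : BnIdx n) : ℝ :=
  ∑ s, pencil n t s u x * pd (pencil n t v w) s x

lemma nestedBracket_inl_inl (x : BnIdx n → ℝ) (u : BnIdx n) (i j : Fin n) :
    nestedBracket t x u (.inl i) (.inl j) = dirAA (av x) (bv x)
      (av fun s ↦ pencil n t s u x) (bv fun s ↦ pencil n t s u x) i j := by
  rw [nestedBracket, pencil_inl_inl]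
  exact (hasDirDeriv_entryAA i j).sum_mul_pd

lemma nestedBracket_inl_inr (x : BnIdx n → ℝ) (u : BnIdx n) (i j : Fin n) :
    nestedBracket t x u (.inl i) (.inr j) = dirAB t (cubeCoeff n) (av x) (bv x)
      (av fun s ↦ pencil n t s u x) (bv fun s ↦ pencil n t s u x) i j := by
  rw [nestedBracket, pencil_inl_inr]
  exact (hasDirDeriv_entryAB t _ i j).sum_mul_pd

lemma nestedBracket_inr_inl (x : BnIdx n → ℝ) (u : BnIdx n) (i j : Fin n) :
    nestedBracket t x u (.inr j) (.inl i) = -dirAB t (cubeCoeff n) (av x) (bv x)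
      (av fun s ↦ pencil n t s u x) (bv fun s ↦ pencil n t s u x) i j := by
  rw [nestedBracket, pencil_inr_inl]
  exact (hasDirDeriv_entryAB t _ i j).neg.sum_mul_pd

lemma nestedBracket_inr_inr (x : BnIdx n → ℝ) (u : BnIdx n) (i j : Fin n) :
    nestedBracket t x u (.inr i) (.inr j) = dirBB (av x) (bv x)
      (av fun s ↦ pencil n t s u x) (bv fun s ↦ pencil n t s u x) i j := by
  rw [nestedBracket, pencil_inr_inr]
  exact (hasDirDeriv_entryBB i j).sum_mul_pd

lemma pencil_jacobi (x : BnIdx n → ℝ) (u v w : BnIdx n) :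
    nestedBracket t x u v w + nestedBracket t x v w u + nestedBracket t x w u v = 0 := by
  have hc : ∀ l, l + 1 < n → cubeCoeff n l = 1 := fun l hl ↦ if_neg hl.ne
  have aab (i j k : Fin n) : nestedBracket t x (.inl i) (.inl j) (.inr k)
      + nestedBracket t x (.inl j) (.inr k) (.inl i)
      + nestedBracket t x (.inr k) (.inl i) (.inl j) = 0 := by
    simpa only [nestedBracket_inl_inl, nestedBracket_inl_inr, nestedBracket_inr_inl,
      av_pencil_inl, bv_pencil_inl, av_pencil_inr, bv_pencil_inr, ← sub_eq_add_neg] using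
      jacobi_aab hc i j k i.2 j.2 k.2
  have abb (i j k : Fin n) : nestedBracket t x (.inl i) (.inr j) (.inr k)
      + nestedBracket t x (.inr j) (.inr k) (.inl i)
      + nestedBracket t x (.inr k) (.inl i) (.inr j) = 0 := by
    simpa only [nestedBracket_inr_inr, nestedBracket_inl_inr, nestedBracket_inr_inl,
      av_pencil_inl, bv_pencil_inl, av_pencil_inr, bv_pencil_inr, ← sub_eq_add_neg] using
      jacobi_abb hc i j k i.2 j.2 k.2
  rcases u with i | i <;> rcases v with j | j <;> rcases w with k | k
  · simpa only [nestedBracket_inl_inl, av_pencil_inl, bv_pencil_inl] using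
      jacobi_aaa i j k i.2 j.2 k.2
  · exact aab i j k
  · linarith [aab k i j]
  · exact abb i j k
  · linarith [aab j k i]
  · linarith [abb j k i]
  · linarith [abb k i j]
  · simpa only [nestedBracket_inr_inr, av_pencil_inr, bv_pencil_inr] using
      jacobi_bbb hc i j k i.2 j.2 k.2

lemma pencil_zero (u v : BnIdx n) : pencil n 0 u v = bnCubP n u v := by
  ext y
  simp [pencil]

lemma pencil_one (u v : BnIdx n) :
    pencil n 1 u v = fun y ↦ bnLinP n u v y + bnCubP n u v y := by
  ext y
  simp [pencil]

end Pencil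

/-- The cubic `B_n`-Toda bracket `π₃` satisfies the Jacobi identity, and it is
compatible with the linear bracket `π₁`:  `π₁ + π₃` also satisfies the Jacobi
identity. -/
theorem bnCubic_jacobi_and_compatible (n : ℕ) :
    (∀ (x : BnIdx n → ℝ) (u v w : BnIdx n),
      ∑ s : BnIdx n, (bnCubP n s u x * pd (bnCubP n v w) s x
        + bnCubP n s v x * pd (bnCubP n w u) s x
        + bnCubP n s w x * pd (bnCubP n u v) s x) = 0)
    ∧ (∀ (x : BnIdx n → ℝ) (u v w : BnIdx n),
      ∑ s : BnIdx n,
        ((bnLinP n s u x + bnCubP n s u x)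
            * pd (fun y => bnLinP n v w y + bnCubP n v w y) s x
          + (bnLinP n s v x + bnCubP n s v x)
            * pd (fun y => bnLinP n w u y + bnCubP n w u y) s x
          + (bnLinP n s w x + bnCubP n s w x)
            * pd (fun y => bnLinP n u v y + bnCubP n u v y) s x) = 0) := by
  refine ⟨fun x u v w ↦ ?_, fun x u v w ↦ ?_⟩
  · simpa only [Finset.sum_add_distrib, nestedBracket, pencil_zero] using
      pencil_jacobi 0 x u v w
  · simpa only [Finset.sum_add_distrib, nestedBracket, pencil_one] using
      pencil_jacobi 1 x u v w
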